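/- Let Ψ : [0,∞)² → [0,∞) satisfy (Ψ1)–(Ψ4) and in addition (Ψ6): for i,j∈{1,2} with j≠i, 2∂ᵢᵢΨ ≤ min(y_j∂ᵢᵢⱼΨ, 0) a.e. on [0,∞)². Let Φ be the loading–unloading density built from Ψ. Then for every fixed z₁,z₂ > 0, each fixed value of the other y-variable, and each l ∈ {1,2}, the map y_l ↦ Φ(y,z) is convex and coincides with a quadratic polynomial on the unloading zone {0 ≤ y_l < z_l}, and is concave on the loading zone {y_l ≥ z_l}. -/

import Mathlib

open MeasureTheory Set

/-- A loading density `Ψ : [0,∞)² → [0,∞)` together with its partial derivatives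
`Ψ₁, Ψ₂, Ψ₁₁, Ψ₂₂, Ψ₁₂, Ψ₁₁₂, Ψ₁₂₂`, satisfying assumptions (Ψ1)–(Ψ4). -/
structure LoadingDensity where
  Ψ : ℝ → ℝ → ℝ
  Ψ₁ : ℝ → ℝ → ℝ
  Ψ₂ : ℝ → ℝ → ℝ
  Ψ₁₁ : ℝ → ℝ → ℝ
  Ψ₂₂ : ℝ → ℝ → ℝ
  Ψ₁₂ : ℝ → ℝ → ℝ
  Ψ₁₁₂ : ℝ → ℝ → ℝ
  Ψ₁₂₂ : ℝ → ℝ → ℝ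
  /-- `Ψ` is `[0,∞)`-valued on the quadrant. -/
  nonneg : ∀ y₁ y₂ : ℝ, 0 ≤ y₁ → 0 ≤ y₂ → 0 ≤ Ψ y₁ y₂
  /-- (Ψ1) -/
  zero : Ψ 0 0 = 0
  /-- (Ψ2): boundedness. -/
  bounded : ∃ M : ℝ, ∀ y₁ y₂ : ℝ, 0 ≤ y₁ → 0 ≤ y₂ → Ψ y₁ y₂ ≤ M
  /-- (Ψ2): Lipschitz continuity. -/
  lipschitz : ∃ L : ℝ, ∀ y₁ y₂ y₁' y₂' : ℝ, 0 ≤ y₁ → 0 ≤ y₂ → 0 ≤ y₁' → 0 ≤ y₂' →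
    |Ψ y₁ y₂ - Ψ y₁' y₂'| ≤ L * (|y₁ - y₁'| + |y₂ - y₂'|)
  /-- `Ψ₁` is the first partial derivative of `Ψ` on `(0,∞)²`. -/
  hasDeriv₁ : ∀ y₁ y₂ : ℝ, 0 < y₁ → 0 < y₂ → HasDerivAt (fun t => Ψ t y₂) (Ψ₁ y₁ y₂) y₁
  /-- `Ψ₂` is the second partial derivative of `Ψ` on `(0,∞)²`. -/
  hasDeriv₂ : ∀ y₁ y₂ : ℝ, 0 < y₁ → 0 < y₂ → HasDerivAt (fun t => Ψ y₁ t) (Ψ₂ y₁ y₂) y₂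
  /-- `Ψ₁₂` is the mixed second partial derivative on `(0,∞)²`. -/
  hasDeriv₁₂ : ∀ y₁ y₂ : ℝ, 0 < y₁ → 0 < y₂ → HasDerivAt (fun t => Ψ₁ y₁ t) (Ψ₁₂ y₁ y₂) y₂
  /-- (Ψ2): `∇Ψ` and `∂₁₂Ψ` are locally Lipschitz on `(0,∞)²`. -/
  gradLocLip : ∀ K : Set (ℝ × ℝ), IsCompact K → K ⊆ Ioi (0:ℝ) ×ˢ Ioi (0:ℝ) →
    ∃ L : ℝ, ∀ p ∈ K, ∀ q ∈ K,
      |Ψ₁ p.1 p.2 - Ψ₁ q.1 q.2| ≤ L * ‖p - q‖ ∧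
      |Ψ₂ p.1 p.2 - Ψ₂ q.1 q.2| ≤ L * ‖p - q‖ ∧
      |Ψ₁₂ p.1 p.2 - Ψ₁₂ q.1 q.2| ≤ L * ‖p - q‖
  /-- a.e. second derivative `Ψ₁₁`. -/
  hasDeriv₁₁ : ∀ᵐ p ∂(volume : Measure (ℝ × ℝ)), 0 < p.1 → 0 < p.2 →
    HasDerivAt (fun t => Ψ₁ t p.2) (Ψ₁₁ p.1 p.2) p.1
  /-- a.e. second derivative `Ψ₂₂`. -/
  hasDeriv₂₂ : ∀ᵐ p ∂(volume : Measure (ℝ × ℝ)), 0 < p.1 → 0 < p.2 →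
    HasDerivAt (fun t => Ψ₂ p.1 t) (Ψ₂₂ p.1 p.2) p.2
  /-- a.e. third derivative `Ψ₁₁₂`. -/
  hasDeriv₁₁₂ : ∀ᵐ p ∂(volume : Measure (ℝ × ℝ)), 0 < p.1 → 0 < p.2 →
    HasDerivAt (fun t => Ψ₁₂ t p.2) (Ψ₁₁₂ p.1 p.2) p.1
  /-- a.e. third derivative `Ψ₁₂₂`. -/
  hasDeriv₁₂₂ : ∀ᵐ p ∂(volume : Measure (ℝ × ℝ)), 0 < p.1 → 0 < p.2 →
    HasDerivAt (fun t => Ψ₁₂ p.1 t) (Ψ₁₂₂ p.1 p.2) p.2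
  /-- (Ψ3): `∂ᵢΨ ≥ max(yᵢ∂ᵢᵢΨ,0)` and `∂₁₂Ψ ≤ min(yᵢ∂ᵢᵢⱼΨ,0)` a.e. on `[0,∞)²`. -/
  psi3 : ∀ᵐ p ∂(volume : Measure (ℝ × ℝ)), 0 ≤ p.1 → 0 ≤ p.2 →
    max (p.1 * Ψ₁₁ p.1 p.2) 0 ≤ Ψ₁ p.1 p.2 ∧
    max (p.2 * Ψ₂₂ p.1 p.2) 0 ≤ Ψ₂ p.1 p.2 ∧
    Ψ₁₂ p.1 p.2 ≤ min (p.1 * Ψ₁₁₂ p.1 p.2) 0 ∧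
    Ψ₁₂ p.1 p.2 ≤ min (p.2 * Ψ₁₂₂ p.1 p.2) 0
  /-- (Ψ4). -/
  psi4 : ∃ M : ℝ, ∀ y₁ y₂ : ℝ, 0 < y₁ → 0 < y₂ → (y₁ + y₂) * |Ψ₁₂ y₁ y₂| ≤ M

/-- The loading–unloading density `Φ` built from a loading density `Ψ`. -/
noncomputable def Phi (L : LoadingDensity) (y₁ y₂ z₁ z₂ : ℝ) : ℝ :=
  if z₁ ≤ y₁ then
    if z₂ ≤ y₂ then L.Ψ y₁ y₂
    else L.Ψ y₁ z₂ - z₂ / 2 * L.Ψ₂ y₁ z₂ * (1 - (y₂ / z₂) ^ 2)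
  else
    if z₂ ≤ y₂ then L.Ψ z₁ y₂ - z₁ / 2 * L.Ψ₁ z₁ y₂ * (1 - (y₁ / z₁) ^ 2)
    else L.Ψ z₁ z₂ - z₁ / 2 * L.Ψ₁ z₁ z₂ * (1 - (y₁ / z₁) ^ 2)
      - z₂ / 2 * L.Ψ₂ z₁ z₂ * (1 - (y₂ / z₂) ^ 2)
      + z₁ * z₂ / 4 * L.Ψ₁₂ z₁ z₂ * (1 - (y₁ / z₁) ^ 2) * (1 - (y₂ / z₂) ^ 2)

/-!
In one variable, the loading–unloading construction keeps a function beyond a threshold `z` and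
replaces it below `z` by the parabola with vertex at `0` that has the same value and slope at `z`.
The parabola is convex as soon as this slope is nonnegative. The density `Φ` is this construction
applied in `y₁` and then in `y₂`: for fixed `y₁`, the first application turns `Ψ` into
`t ↦ Ψ x t - κ * x * Ψ₁ x t` for some `x > 0` and `0 ≤ κ ≤ 1 / 2`. Its slope `Ψ₂ - κ * x * Ψ₁₂` is
nonnegative by (Ψ3), and nonincreasing because (Ψ6) gives
`Ψ₂₂ - κ * x * Ψ₁₂₂ ≤ (1 - 2 * κ) * Ψ₂₂ ≤ 0` almost everywhere. The case of the variable `y₁`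
follows by exchanging the variables, which is legitimate since `∂₁Ψ₂ = Ψ₁₂`.
-/

open scoped Topology

section MixedPartials

variable {𝕜 E : Type*} [RCLike 𝕜] [NormedAddCommGroup E] [NormedSpace 𝕜 E]

theorem eventually_norm_second_difference_sub_le {f f₁ f₁₂ : 𝕜 → 𝕜 → E} {x y : 𝕜}
    (h₁ : ∀ᶠ p in 𝓝 (x, y), HasDerivAt (fun t => f t p.2) (f₁ p.1 p.2) p.1)
    (h₁₂ : ∀ᶠ p in 𝓝 (x, y), HasDerivAt (f₁ p.1) (f₁₂ p.1 p.2) p.2)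
    (hcont : ContinuousAt (Function.uncurry f₁₂) (x, y)) {ε : ℝ} (hε : 0 < ε) :
    ∀ᶠ p in 𝓝 (x, y), ‖f p.1 p.2 - f p.1 y - (f x p.2 - f x y)
      - (p.1 - x) • (p.2 - y) • f₁₂ x y‖ ≤ ε * ‖p.2 - y‖ * ‖p.1 - x‖ := by
  obtain ⟨δ, hδ, hball⟩ := Metric.eventually_nhds_iff_ball.1
    ((h₁.and h₁₂).and (hcont.eventually (Metric.closedBall_mem_nhds _ hε)))
  simp only [← ball_prod_same] at hball
  have increment_le : ∀ t ∈ Metric.ball x δ, ∀ s ∈ Metric.ball y δ,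
      ‖f₁ t s - f₁ t y - (s - y) • f₁₂ x y‖ ≤ ε * ‖s - y‖ := by
    intro t ht s hs
    have := (convex_ball y δ).norm_image_sub_le_of_norm_hasDerivWithin_le (C := ε)
      (f := fun σ => f₁ t σ - σ • f₁₂ x y) (f' := fun σ => f₁₂ t σ - (1 : 𝕜) • f₁₂ x y)
      (fun σ hσ => ((hball (t, σ) ⟨ht, hσ⟩).1.2.sub
        ((hasDerivAt_id σ).smul_const _)).hasDerivWithinAt)
      (fun σ hσ => by
        simpa [dist_eq_norm] using (hball (t, σ) ⟨ht, hσ⟩).2) (Metric.mem_ball_self hδ) hs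
    convert this using 2
    module
  filter_upwards [Metric.ball_mem_nhds (x, y) hδ] with ⟨t, s⟩ hp
  rw [← ball_prod_same] at hp
  have := (convex_ball x δ).norm_image_sub_le_of_norm_hasDerivWithin_le (C := ε * ‖s - y‖)
    (f := fun τ => f τ s - f τ y - τ • (s - y) • f₁₂ x y)
    (f' := fun τ => f₁ τ s - f₁ τ y - (1 : 𝕜) • (s - y) • f₁₂ x y)
    (fun τ hτ => (((hball (τ, s) ⟨hτ, hp.2⟩).1.1.sub
      (hball (τ, y) ⟨hτ, Metric.mem_ball_self hδ⟩).1.1).sub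
        ((hasDerivAt_id τ).smul_const _)).hasDerivWithinAt)
    (fun τ hτ => by simpa only [one_smul] using increment_le τ hτ s hp.2)
    (Metric.mem_ball_self hδ) hp.1
  convert this using 2
  module

/- Peano's form of the symmetry of mixed partial derivatives: the existence of `∂₁∂₂f` is part of
the conclusion, which is why the symmetry of the second Fréchet derivative does not apply. -/
theorem hasDerivAt_partial_snd_of_mixed_continuousAt {f f₁ f₂ f₁₂ : 𝕜 → 𝕜 → E} {x y : 𝕜}
    (h₁ : ∀ᶠ p in 𝓝 (x, y), HasDerivAt (fun t => f t p.2) (f₁ p.1 p.2) p.1)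
    (h₂ : ∀ᶠ t in 𝓝 x, HasDerivAt (f t) (f₂ t y) y)
    (h₁₂ : ∀ᶠ p in 𝓝 (x, y), HasDerivAt (f₁ p.1) (f₁₂ p.1 p.2) p.2)
    (hcont : ContinuousAt (Function.uncurry f₁₂) (x, y)) :
    HasDerivAt (fun t => f₂ t y) (f₁₂ x y) x := by
  rw [hasDerivAt_iff_isLittleO, Asymptotics.isLittleO_iff]
  intro ε hε
  have second_difference :=
    (eventually_norm_second_difference_sub_le h₁ h₁₂ hcont hε).curry_nhds
  filter_upwards [second_difference, h₂] with t ht ht₂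
  have deriv_difference : HasDerivAt (fun s => f t s - f x s - s • (t - x) • f₁₂ x y)
      (f₂ t y - f₂ x y - (1 : 𝕜) • (t - x) • f₁₂ x y) y :=
    (ht₂.sub h₂.self_of_nhds).sub ((hasDerivAt_id y).smul_const _)
  rw [one_smul] at deriv_difference
  refine deriv_difference.le_of_lip' (by positivity) ?_
  filter_upwards [ht] with s hs
  convert hs using 1
  · congr 1
    module
  · ring

end MixedPartials

section LocallyLipschitz

theorem locallyLipschitzOn_of_forall_isCompact {X Y : Type*} [PseudoMetricSpace X]
    [LocallyCompactSpace X] [PseudoMetricSpace Y] {U : Set X} (hU : IsOpen U) {f : X → Y}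
    (h : ∀ K, IsCompact K → K ⊆ U →
      ∃ C : ℝ, ∀ p ∈ K, ∀ q ∈ K, dist (f p) (f q) ≤ C * dist p q) :
    LocallyLipschitzOn U f := by
  intro p hp
  obtain ⟨K, hKp, hKU, hK⟩ := local_compact_nhds (hU.mem_nhds hp)
  obtain ⟨C, hC⟩ := h K hK hKU
  exact ⟨C.toNNReal, K, mem_nhdsWithin_of_mem_nhds hKp, LipschitzOnWith.of_dist_le' hC⟩

theorem absolutelyContinuousOnInterval_section_of_locallyLipschitzOn {X F : Type*}
    [PseudoMetricSpace X] [PseudoMetricSpace F] {U : Set X} {s : Set ℝ} [s.OrdConnected]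
    {g : X → ℝ → F} (hg : LocallyLipschitzOn (U ×ˢ s) (Function.uncurry g)) {x : X} (hx : x ∈ U)
    {a b : ℝ} (ha : a ∈ s) (hb : b ∈ s) : AbsolutelyContinuousOnInterval (g x) a b := by
  have segment_subset : {x} ×ˢ uIcc a b ⊆ U ×ˢ s :=
    prod_mono (singleton_subset_iff.2 hx) (OrdConnected.uIcc_subset ‹_› ha hb)
  obtain ⟨K, hK⟩ := (hg.mono segment_subset).exists_lipschitzOnWith_of_compact
    (isCompact_singleton.prod isCompact_uIcc)
  exact (hK.comp (LipschitzWith.prodMk_left x).lipschitzOnWith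
    fun _ ht => ⟨rfl, ht⟩).absolutelyContinuousOnInterval

end LocallyLipschitz

section AlmostEverywhere

theorem forall_mem_le_of_ae_le {X Y : Type*} [TopologicalSpace X] [MeasurableSpace X]
    [OpensMeasurableSpace X] {μ : Measure X} [μ.IsOpenPosMeasure] [TopologicalSpace Y]
    [LinearOrder Y] [OrderClosedTopology Y] {U : Set X} (hU : IsOpen U) {f g : X → Y}
    (hf : ContinuousOn f U) (hg : ContinuousOn g U) (h : ∀ᵐ x ∂μ, x ∈ U → f x ≤ g x) :
    ∀ x ∈ U, f x ≤ g x := by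
  have max_eq : EqOn (fun x => max (f x) (g x)) g U :=
    Measure.eqOn_open_of_ae_eq ((ae_restrict_iff' hU.measurableSet).2 <|
      h.mono fun x hx hxU => max_eq_right (hx hxU)) hU (hf.sup hg) hg
  exact fun x hx => max_eq_right_iff.1 (max_eq hx)

theorem antitoneOn_of_ae_deriv_nonpos {f : ℝ → ℝ} {s : Set ℝ} [s.OrdConnected]
    (hf : ∀ a ∈ s, ∀ b ∈ s, AbsolutelyContinuousOnInterval f a b)
    (hderiv : ∀ᵐ t, t ∈ s → deriv f t ≤ 0) : AntitoneOn f s := by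
  intro a ha b hb hab
  rw [← sub_nonpos, ← (hf a ha b hb).integral_deriv_eq_sub,
    intervalIntegral.integral_of_le hab]
  refine setIntegral_nonpos_of_ae_restrict ((ae_restrict_iff' measurableSet_Ioc).2 ?_)
  filter_upwards [hderiv] with t ht ht_mem
  exact ht (OrdConnected.out ‹_› ha hb (Ioc_subset_Icc_self ht_mem))

/- By Fubini the sign of the derivative is inherited by almost every section only; continuity in
the first variable extends the monotonicity to all of them. -/
theorem antitoneOn_section_of_ae_deriv_nonpos {X : Type*} [TopologicalSpace X] [MeasurableSpace X]
    [OpensMeasurableSpace X] {μ : Measure X} [μ.IsOpenPosMeasure] {U : Set X} (hU : IsOpen U)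
    {s : Set ℝ} [s.OrdConnected] {g : X → ℝ → ℝ} (hcont : ∀ t ∈ s, ContinuousOn (fun x => g x t) U)
    (hac : ∀ x ∈ U, ∀ a ∈ s, ∀ b ∈ s, AbsolutelyContinuousOnInterval (g x) a b)
    (hderiv : ∀ᵐ p ∂μ.prod volume, p.1 ∈ U → p.2 ∈ s → deriv (g p.1) p.2 ≤ 0) :
    ∀ x ∈ U, AntitoneOn (g x) s := by
  intro x hx a ha b hb hab
  refine forall_mem_le_of_ae_le (μ := μ) hU (hcont b hb) (hcont a ha) ?_ x hx
  filter_upwards [Measure.ae_ae_of_ae_prod hderiv] with u hu huU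
  exact antitoneOn_of_ae_deriv_nonpos (hac u huU) (hu.mono fun t ht => ht huU) ha hb hab

theorem ae_prod_swap {X Y : Type*} [MeasurableSpace X] [MeasurableSpace Y] {μ : Measure X}
    {ν : Measure Y} [SFinite μ] [SFinite ν] {P : X × Y → Prop} (h : ∀ᵐ p ∂μ.prod ν, P p) :
    ∀ᵐ p ∂ν.prod μ, P p.swap :=
  Measure.measurePreserving_swap.quasiMeasurePreserving.ae h

end AlmostEverywhere

section LoadUnload

/-- The loading–unloading extension of a function `g` of one variable with derivative `g'`: it
equals `g` from the threshold `z` on, and below `z` the parabola with vertex at `0` that has the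
same value and slope as `g` at `z`. The derivative is passed as a separate argument so that the
extension is linear in the pair `(g, g')`. -/
noncomputable def loadUnload (g g' : ℝ → ℝ) (z y : ℝ) : ℝ :=
  if z ≤ y then g y else g z - z / 2 * g' z * (1 - (y / z) ^ 2)

variable {g g' : ℝ → ℝ} {z y : ℝ}

theorem loadUnload_of_le (h : z ≤ y) : loadUnload g g' z y = g y :=
  if_pos h

theorem loadUnload_of_lt (h : y < z) :
    loadUnload g g' z y = g' z / (2 * z) * y ^ 2 + (g z - z / 2 * g' z) := by
  rw [loadUnload, if_neg h.not_ge]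
  rcases eq_or_ne z 0 with rfl | hz
  · simp
  · field_simp
    ring

theorem exists_loadUnload_eq_quadratic (g g' : ℝ → ℝ) (z : ℝ) :
    ∃ a b c : ℝ, ∀ y < z, loadUnload g g' z y = a * y ^ 2 + b * y + c :=
  ⟨g' z / (2 * z), 0, g z - z / 2 * g' z, fun y hy => by rw [loadUnload_of_lt hy]; ring⟩

theorem convexOn_loadUnload (hz : 0 ≤ z) (hg' : 0 ≤ g' z) :
    ConvexOn ℝ (Iio z) (loadUnload g g' z) := by
  have parabola_convex : ConvexOn ℝ (Iio z)
      (fun y => g' z / (2 * z) * y ^ 2 + (g z - z / 2 * g' z)) :=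
    (((even_two.convexOn_pow (𝕜 := ℝ)).subset (subset_univ _) (convex_Iio z)).smul
      (by positivity)).add_const _
  exact parabola_convex.congr fun y hy => (loadUnload_of_lt hy).symm

theorem concaveOn_loadUnload (hg : ConcaveOn ℝ (Ici z) g) :
    ConcaveOn ℝ (Ici z) (loadUnload g g' z) :=
  hg.congr fun _ hy => (loadUnload_of_le hy).symm

theorem exists_loadUnload_eq_sub (hz : 0 < z) (hy : 0 ≤ y) :
    ∃ x, 0 < x ∧ ∃ κ ∈ Icc (0 : ℝ) (1 / 2),
      ∀ g g' : ℝ → ℝ, loadUnload g g' z y = g x - κ * x * g' x := by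
  rcases le_or_gt z y with h | h
  · exact ⟨y, hz.trans_le h, 0, by norm_num, fun g g' => by simp [loadUnload_of_le h]⟩
  · have ratio_le_one : (y / z) ^ 2 ≤ 1 :=
      pow_le_one₀ (by positivity) ((div_le_one hz).2 h.le)
    refine ⟨z, hz, (1 - (y / z) ^ 2) / 2, ⟨by linarith, by linarith [sq_nonneg (y / z)]⟩,
      fun g g' => ?_⟩
    rw [loadUnload, if_neg h.not_ge]
    ring

end LoadUnload

namespace LoadingDensity

variable (L : LoadingDensity)

theorem locallyLipschitzOn_Ψ₂ :
    LocallyLipschitzOn (Ioi 0 ×ˢ Ioi 0) (Function.uncurry L.Ψ₂) := by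
  refine locallyLipschitzOn_of_forall_isCompact (isOpen_Ioi.prod isOpen_Ioi) fun K hK hKU => ?_
  obtain ⟨C, hC⟩ := L.gradLocLip K hK hKU
  exact ⟨C, fun p hp q hq => by
    simpa only [Function.uncurry, Real.dist_eq, dist_eq_norm p q] using (hC p hp q hq).2.1⟩

theorem locallyLipschitzOn_Ψ₁₂ :
    LocallyLipschitzOn (Ioi 0 ×ˢ Ioi 0) (Function.uncurry L.Ψ₁₂) := by
  refine locallyLipschitzOn_of_forall_isCompact (isOpen_Ioi.prod isOpen_Ioi) fun K hK hKU => ?_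
  obtain ⟨C, hC⟩ := L.gradLocLip K hK hKU
  exact ⟨C, fun p hp q hq => by
    simpa only [Function.uncurry, Real.dist_eq, dist_eq_norm p q] using (hC p hp q hq).2.2⟩

theorem hasDerivAt_Ψ₂_fst {x y : ℝ} (hx : 0 < x) (hy : 0 < y) :
    HasDerivAt (fun t => L.Ψ₂ t y) (L.Ψ₁₂ x y) x := by
  have quadrant_mem : Ioi (0 : ℝ) ×ˢ Ioi (0 : ℝ) ∈ 𝓝 (x, y) :=
    prod_mem_nhds (Ioi_mem_nhds hx) (Ioi_mem_nhds hy)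
  refine hasDerivAt_partial_snd_of_mixed_continuousAt (f := L.Ψ) (f₁ := L.Ψ₁) ?_ ?_ ?_
    (L.locallyLipschitzOn_Ψ₁₂.continuousOn.continuousAt quadrant_mem)
  · filter_upwards [quadrant_mem] with p hp using L.hasDeriv₁ p.1 p.2 hp.1 hp.2
  · filter_upwards [Ioi_mem_nhds hx] with t ht using L.hasDeriv₂ t y ht hy
  · filter_upwards [quadrant_mem] with p hp using L.hasDeriv₁₂ p.1 p.2 hp.1 hp.2

/-- The loading density with the roles of its two variables exchanged. -/
def swap : LoadingDensity where
  Ψ a b := L.Ψ b a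
  Ψ₁ a b := L.Ψ₂ b a
  Ψ₂ a b := L.Ψ₁ b a
  Ψ₁₁ a b := L.Ψ₂₂ b a
  Ψ₂₂ a b := L.Ψ₁₁ b a
  Ψ₁₂ a b := L.Ψ₁₂ b a
  Ψ₁₁₂ a b := L.Ψ₁₂₂ b a
  Ψ₁₂₂ a b := L.Ψ₁₁₂ b a
  nonneg a b ha hb := L.nonneg b a hb ha
  zero := L.zero
  bounded := L.bounded.imp fun _ hM a b ha hb => hM b a hb ha
  lipschitz := L.lipschitz.imp fun C hC a b a' b' ha hb ha' hb' => by
    simpa only [add_comm |b - b'|] using hC b a b' a' hb ha hb' ha'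
  hasDeriv₁ a b ha hb := L.hasDeriv₂ b a hb ha
  hasDeriv₂ a b ha hb := L.hasDeriv₁ b a hb ha
  hasDeriv₁₂ _ _ ha hb := L.hasDerivAt_Ψ₂_fst hb ha
  gradLocLip K hK hKU := by
    obtain ⟨C, hC⟩ := L.gradLocLip (Prod.swap '' K) (hK.image continuous_swap)
      (image_subset_iff.2 fun p hp => (hKU hp).symm)
    refine ⟨C, fun p hp q hq => ?_⟩
    have norm_swap_sub : ‖p.swap - q.swap‖ = ‖p - q‖ := max_comm _ _
    obtain ⟨hΨ₁, hΨ₂, hΨ₁₂⟩ := norm_swap_sub ▸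
      hC p.swap (mem_image_of_mem _ hp) q.swap (mem_image_of_mem _ hq)
    exact ⟨hΨ₂, hΨ₁, hΨ₁₂⟩
  hasDeriv₁₁ := (ae_prod_swap L.hasDeriv₂₂).mono fun _ h h₁ h₂ => h h₂ h₁
  hasDeriv₂₂ := (ae_prod_swap L.hasDeriv₁₁).mono fun _ h h₁ h₂ => h h₂ h₁
  hasDeriv₁₁₂ := (ae_prod_swap L.hasDeriv₁₂₂).mono fun _ h h₁ h₂ => h h₂ h₁
  hasDeriv₁₂₂ := (ae_prod_swap L.hasDeriv₁₁₂).mono fun _ h h₁ h₂ => h h₂ h₁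
  psi3 := (ae_prod_swap L.psi3).mono fun _ h h₁ h₂ =>
    let ⟨hΨ₁, hΨ₂, hΨ₁₁₂, hΨ₁₂₂⟩ := h h₂ h₁
    ⟨hΨ₂, hΨ₁, hΨ₁₂₂, hΨ₁₁₂⟩
  psi4 := L.psi4.imp fun _ hM a b ha hb => add_comm b a ▸ hM b a hb ha

theorem Phi_swap (y₁ y₂ z₁ z₂ : ℝ) : Phi L.swap y₁ y₂ z₁ z₂ = Phi L y₂ y₁ z₂ z₁ := by
  unfold Phi swap
  split_ifs <;> ring

theorem Phi_eq_loadUnload (y₁ y₂ z₁ z₂ : ℝ) :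
    Phi L y₁ y₂ z₁ z₂ =
      loadUnload (fun t => loadUnload (L.Ψ · t) (L.Ψ₁ · t) z₁ y₁)
        (fun t => loadUnload (L.Ψ₂ · t) (L.Ψ₁₂ · t) z₁ y₁) z₂ y₂ := by
  unfold Phi loadUnload
  split_ifs <;> ring

/-- Assumption (Ψ6) for the index `i = 2`; for `i = 1` it is this condition on `L.swap`. -/
def Psi6Snd : Prop :=
  ∀ᵐ p ∂(volume : Measure (ℝ × ℝ)), 0 ≤ p.1 → 0 ≤ p.2 →
    2 * L.Ψ₂₂ p.1 p.2 ≤ min (p.1 * L.Ψ₁₂₂ p.1 p.2) 0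

variable {L} {x y κ : ℝ}

theorem Ψ₂_nonneg (hx : 0 < x) (hy : 0 < y) : 0 ≤ L.Ψ₂ x y := by
  refine forall_mem_le_of_ae_le (μ := volume) (isOpen_Ioi.prod isOpen_Ioi) continuousOn_const
    L.locallyLipschitzOn_Ψ₂.continuousOn ?_ (x, y) ⟨hx, hy⟩
  filter_upwards [L.psi3] with p hp hpU
  exact (le_max_right _ _).trans (hp hpU.1.le hpU.2.le).2.1

theorem Ψ₁₂_nonpos (hx : 0 < x) (hy : 0 < y) : L.Ψ₁₂ x y ≤ 0 := by
  refine forall_mem_le_of_ae_le (μ := volume) (isOpen_Ioi.prod isOpen_Ioi)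
    L.locallyLipschitzOn_Ψ₁₂.continuousOn continuousOn_const ?_ (x, y) ⟨hx, hy⟩
  filter_upwards [L.psi3] with p hp hpU
  exact (hp hpU.1.le hpU.2.le).2.2.1.trans (min_le_right _ _)

theorem Ψ₂_sub_mul_Ψ₁₂_nonneg (hκ : 0 ≤ κ) (hx : 0 < x) (hy : 0 < y) :
    0 ≤ L.Ψ₂ x y - κ * x * L.Ψ₁₂ x y :=
  (Ψ₂_nonneg hx hy).trans <|
    le_sub_self_iff _ |>.2 <| mul_nonpos_of_nonneg_of_nonpos (by positivity) (Ψ₁₂_nonpos hx hy)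

theorem ae_deriv_Ψ₂_sub_mul_Ψ₁₂_nonpos (psi6 : L.Psi6Snd)
    (hκ : κ ∈ Icc (0 : ℝ) (1 / 2)) :
    ∀ᵐ p ∂(volume : Measure (ℝ × ℝ)), 0 < p.1 → 0 < p.2 →
      deriv (fun t => L.Ψ₂ p.1 t - κ * p.1 * L.Ψ₁₂ p.1 t) p.2 ≤ 0 := by
  filter_upwards [psi6, L.hasDeriv₂₂, L.hasDeriv₁₂₂] with p hpsi6 hΨ₂₂ hΨ₁₂₂ h₁ h₂
  have hasDeriv : HasDerivAt (fun t => L.Ψ₂ p.1 t - κ * p.1 * L.Ψ₁₂ p.1 t)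
      (L.Ψ₂₂ p.1 p.2 - κ * p.1 * L.Ψ₁₂₂ p.1 p.2) p.2 :=
    (hΨ₂₂ h₁ h₂).sub ((hΨ₁₂₂ h₁ h₂).const_mul (κ * p.1))
  rw [hasDeriv.deriv]
  obtain ⟨le_mul, le_zero⟩ := le_min_iff.1 (hpsi6 h₁.le h₂.le)
  calc L.Ψ₂₂ p.1 p.2 - κ * p.1 * L.Ψ₁₂₂ p.1 p.2
    _ ≤ (1 - 2 * κ) * L.Ψ₂₂ p.1 p.2 := by linarith [mul_le_mul_of_nonneg_left le_mul hκ.1]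
    _ ≤ 0 := mul_nonpos_of_nonneg_of_nonpos (by linarith [hκ.2]) (by linarith)

theorem antitoneOn_Ψ₂_sub_mul_Ψ₁₂ (psi6 : L.Psi6Snd) (hκ : κ ∈ Icc (0 : ℝ) (1 / 2))
    (hx : 0 < x) :
    AntitoneOn (fun t => L.Ψ₂ x t - κ * x * L.Ψ₁₂ x t) (Ioi 0) := by
  refine antitoneOn_section_of_ae_deriv_nonpos (μ := volume) isOpen_Ioi (s := Ioi 0)
    (g := fun x t => L.Ψ₂ x t - κ * x * L.Ψ₁₂ x t) (fun t ht => ?_) (fun u hu a ha b hb => ?_)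
    (ae_deriv_Ψ₂_sub_mul_Ψ₁₂_nonpos psi6 hκ) x hx
  · have line_mapsTo : MapsTo (fun u : ℝ => (u, t)) (Ioi 0) (Ioi 0 ×ˢ Ioi 0) :=
      fun u hu => ⟨hu, ht⟩
    have line_continuous : ContinuousOn (fun u : ℝ => (u, t)) (Ioi 0) := by fun_prop
    exact (L.locallyLipschitzOn_Ψ₂.continuousOn.comp line_continuous line_mapsTo).sub
      ((continuousOn_const.mul continuousOn_id).mul
        (L.locallyLipschitzOn_Ψ₁₂.continuousOn.comp line_continuous line_mapsTo))
  · exact (absolutelyContinuousOnInterval_section_of_locallyLipschitzOn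
      L.locallyLipschitzOn_Ψ₂ hu ha hb).sub
        ((absolutelyContinuousOnInterval_section_of_locallyLipschitzOn
          L.locallyLipschitzOn_Ψ₁₂ hu ha hb).const_mul (κ * u))

theorem concaveOn_Ψ_sub_mul_Ψ₁ (psi6 : L.Psi6Snd) (hκ : κ ∈ Icc (0 : ℝ) (1 / 2))
    (hx : 0 < x) :
    ConcaveOn ℝ (Ioi 0) (fun t => L.Ψ x t - κ * x * L.Ψ₁ x t) := by
  have hasDeriv : ∀ t ∈ Ioi (0 : ℝ), HasDerivAt (fun t => L.Ψ x t - κ * x * L.Ψ₁ x t)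
      (L.Ψ₂ x t - κ * x * L.Ψ₁₂ x t) t := fun t ht =>
    (L.hasDeriv₂ x t hx ht).sub ((L.hasDeriv₁₂ x t hx ht).const_mul _)
  refine AntitoneOn.concaveOn_of_deriv (convex_Ioi 0)
    (fun t ht => (hasDeriv t ht).continuousAt.continuousWithinAt) ?_ ?_ <;> rw [interior_Ioi]
  · exact fun t ht => (hasDeriv t ht).differentiableAt.differentiableWithinAt
  · exact (antitoneOn_Ψ₂_sub_mul_Ψ₁₂ psi6 hκ hx).congr fun t ht => (hasDeriv t ht).deriv.symm

theorem convexOn_quadratic_concaveOn_Phi_snd {y₁ z₁ z₂ : ℝ} (psi6 : L.Psi6Snd)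
    (hz₁ : 0 < z₁) (hz₂ : 0 < z₂) (hy₁ : 0 ≤ y₁) :
    ConvexOn ℝ (Ico 0 z₂) (fun t => Phi L y₁ t z₁ z₂) ∧
    (∃ a b c : ℝ, ∀ t ∈ Ico (0 : ℝ) z₂, Phi L y₁ t z₁ z₂ = a * t ^ 2 + b * t + c) ∧
    ConcaveOn ℝ (Ici z₂) (fun t => Phi L y₁ t z₁ z₂) := by
  obtain ⟨x, hx, κ, hκ, hred⟩ := exists_loadUnload_eq_sub hz₁ hy₁
  simp only [Phi_eq_loadUnload, hred]
  refine ⟨?_, ?_, ?_⟩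
  · exact (convexOn_loadUnload hz₂.le (Ψ₂_sub_mul_Ψ₁₂_nonneg hκ.1 hx hz₂)).subset
      Ico_subset_Iio_self (convex_Ico 0 z₂)
  · obtain ⟨a, b, c, quadratic⟩ := exists_loadUnload_eq_quadratic
      (fun t => L.Ψ x t - κ * x * L.Ψ₁ x t) (fun t => L.Ψ₂ x t - κ * x * L.Ψ₁₂ x t) z₂
    exact ⟨a, b, c, fun t ht => quadratic t ht.2⟩
  · exact concaveOn_loadUnload ((concaveOn_Ψ_sub_mul_Ψ₁ psi6 hκ hx).subset
      (Ici_subset_Ioi.2 hz₂) (convex_Ici z₂))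

end LoadingDensity

/-- under the additional assumption (Ψ6), for fixed `z₁,z₂ > 0` and each fixed
value of the other variable, `Φ` is convex and quadratic in `y_l` on the unloading zone
`0 ≤ y_l < z_l`, and concave in `y_l` on the loading zone `y_l ≥ z_l`. -/
theorem statement5 (L : LoadingDensity)
    (psi6 : ∀ᵐ p ∂(volume : Measure (ℝ × ℝ)), 0 ≤ p.1 → 0 ≤ p.2 →
      2 * L.Ψ₁₁ p.1 p.2 ≤ min (p.2 * L.Ψ₁₁₂ p.1 p.2) 0 ∧
      2 * L.Ψ₂₂ p.1 p.2 ≤ min (p.1 * L.Ψ₁₂₂ p.1 p.2) 0)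
    (z₁ z₂ : ℝ) (hz₁ : 0 < z₁) (hz₂ : 0 < z₂) :
    (∀ y₂ : ℝ, 0 ≤ y₂ →
      ConvexOn ℝ (Ico 0 z₁) (fun t => Phi L t y₂ z₁ z₂) ∧
      (∃ a b c : ℝ, ∀ t ∈ Ico (0:ℝ) z₁, Phi L t y₂ z₁ z₂ = a * t ^ 2 + b * t + c) ∧
      ConcaveOn ℝ (Ici z₁) (fun t => Phi L t y₂ z₁ z₂)) ∧
    (∀ y₁ : ℝ, 0 ≤ y₁ →
      ConvexOn ℝ (Ico 0 z₂) (fun t => Phi L y₁ t z₁ z₂) ∧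
      (∃ a b c : ℝ, ∀ t ∈ Ico (0:ℝ) z₂, Phi L y₁ t z₁ z₂ = a * t ^ 2 + b * t + c) ∧
      ConcaveOn ℝ (Ici z₂) (fun t => Phi L y₁ t z₁ z₂)) := by
  refine ⟨fun y₂ hy₂ => ?_, fun y₁ hy₁ => ?_⟩
  · have psi6_swap : L.swap.Psi6Snd :=
      (ae_prod_swap psi6).mono fun p hp h₁ h₂ => (hp h₂ h₁).1
    simpa only [LoadingDensity.Phi_swap] using
      LoadingDensity.convexOn_quadratic_concaveOn_Phi_snd psi6_swap hz₂ hz₁ hy₂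
  · have psi6_snd : L.Psi6Snd := psi6.mono fun p hp h₁ h₂ => (hp h₁ h₂).2
    exact LoadingDensity.convexOn_quadratic_concaveOn_Phi_snd psi6_snd hz₁ hz₂ hy₁
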